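/- Let F_m be the free group of rank m ≥ 1 with free basis A, and let F_m^{(n)} denote the n-th term of the derived series of F_m (F_m^{(1)} = F_m', F_m^{(i+1)} = (F_m^{(i)})'). Then the growth rates of the free soluble groups F_m/F_m^{(n)} with respect to the images of A approach 2m-1 as n → ∞: lim_{n→∞} ω(F_m/F_m^{(n)}, A) = 2m-1. -/

import Mathlib

open Filter Topology

/-- Evaluate a word over the alphabet `A^{±1}` (a letter is a pair `(i, b)`, where
`b = true` means the generator `σ i` and `b = false` means its inverse) in a group. -/
def wordEval {m : ℕ} {G : Type*} [Group G] (σ : Fin m → G)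
    (w : List (Fin m × Bool)) : G :=
  (w.map fun ℓ => if ℓ.2 then σ ℓ.1 else (σ ℓ.1)⁻¹).prod

/-- The ball `B(n) = {g ∈ G : ℓ(g) ≤ n}` of radius `n` in a group with respect to the
generating map `σ`: the set of elements represented by words of length at most `n`. -/
def ball {m : ℕ} {G : Type*} [Group G] (σ : Fin m → G) (n : ℕ) : Set G :=
  {g | ∃ w : List (Fin m × Bool), w.length ≤ n ∧ wordEval σ w = g}

/-- The growth rate `ω(G, A) = lim_{n→∞} |B(n)|^{1/n}`; the limit exists by
submultiplicativity of `|B(n)|`, hence equals the `limsup`. -/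
noncomputable def growthRate {m : ℕ} {G : Type*} [Group G] (σ : Fin m → G) : ℝ :=
  Filter.limsup (fun n : ℕ => ((ball σ n).ncard : ℝ) ^ (1 / (n : ℝ))) Filter.atTop

/-- The terms of the derived series of a group are normal subgroups. -/
instance derivedSeriesNormal (G : Type*) [Group G] (n : ℕ) :
    (derivedSeries G n).Normal :=
  derivedSeries_normal G n

/-!
The flow of a path in the Cayley graph of `F/R`, that is, the net number of times it crosses each
edge, depends only on the class of its label in `F/[R, R]`. A self-avoiding path can be read off
from its flow, so distinct self-avoiding words in `F/R` represent distinct elements of `F/[R, R]`.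
Consequently the girth of the Cayley graph grows at each step of the derived series, and every
reduced word of length at most `n` is self-avoiding modulo `F^{(n)}`.

Let the height of a word be its exponent sum in a fixed generator `a`. Flanking a concatenation
`w` of `t` reduced words of length `t + 3` and nonnegative height by `a ^ (t + 4)` and
`a ^ (t + 3)` makes a bridge. Bridges can be concatenated freely while staying self-avoiding, so
for `n` large the submonoid of `F/F^{(n+1)}` generated by these blocks is free. There are at least
`(2m - 1) ^ (t ^ 2)` blocks of length `t ^ 2 + O(t)`, so the growth rate is at least
`(2m - 1) ^ (1 - O(1/t))`. It is at most `2m - 1` because every element is represented by a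
reduced word of minimal length.
-/

section Words

variable {α : Type*}

lemma mk_cons (l : α × Bool) (w : List (α × Bool)) :
    FreeGroup.mk (l :: w) = FreeGroup.mk [l] * FreeGroup.mk w :=
  (FreeGroup.mul_mk (L₁ := [l])).symm

lemma mk_inv_letter (l : α × Bool) :
    FreeGroup.mk [(l.1, !l.2)] = (FreeGroup.mk [l])⁻¹ :=
  (FreeGroup.inv_mk (L := [l])).symm

lemma isPrefix_append_iff {p u v : List α} :
    p <+: u ++ v ↔ p <+: u ∨ ∃ q, q <+: v ∧ u ++ q = p := by
  constructor
  · rintro ⟨t, ht⟩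
    rcases List.append_eq_append_iff.1 ht with ⟨r, hr, -⟩ | ⟨r, hr, hv⟩
    · exact .inl ⟨r, hr.symm⟩
    · exact .inr ⟨r, ⟨t, hv.symm⟩, hr.symm⟩
  · rintro (h | ⟨q, hq, rfl⟩)
    · exact h.trans (List.prefix_append u v)
    · exact (List.prefix_append_right_inj u).2 hq

lemma isSuffix_append_iff {s u v : List α} :
    s <:+ u ++ v ↔ s <:+ v ∨ ∃ q, q <:+ u ∧ q ++ v = s := by
  rw [← List.reverse_prefix, List.reverse_append, isPrefix_append_iff, List.reverse_prefix]
  refine or_congr_right ⟨?_, ?_⟩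
  · rintro ⟨q, hq, h⟩
    exact ⟨q.reverse, List.reverse_prefix.1 (by rwa [List.reverse_reverse]),
      by simpa using congrArg List.reverse h⟩
  · rintro ⟨q, hq, rfl⟩
    exact ⟨q.reverse, List.reverse_prefix.2 hq, by simp⟩

/-- A word is self-avoiding modulo `R` if none of its nonempty subwords is trivial in `F/R`, that
is, if the path it labels in the Cayley graph of `F/R` visits no vertex twice. -/
def SelfAvoiding (R : Subgroup (FreeGroup α)) (w : List (α × Bool)) : Prop :=
  ∀ v, v <:+: w → v ≠ [] → FreeGroup.mk v ∉ R

lemma SelfAvoiding.infix {R : Subgroup (FreeGroup α)} {u w : List (α × Bool)}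
    (hw : SelfAvoiding R w) (huw : u <:+: w) : SelfAvoiding R u :=
  fun v hv => hw v (hv.trans huw)

lemma SelfAvoiding.eq_nil {R : Subgroup (FreeGroup α)} {w : List (α × Bool)}
    (hw : SelfAvoiding R w) (h : FreeGroup.mk w ∈ R) : w = [] :=
  by_contra fun hne => hw w List.infix_rfl hne h

end Words

section Flow

open RegularWreathProduct

lemma commutator_ker_rightHom_comp_le_ker {G D Q : Type*} [Group G] [CommGroup D] [Group Q]
    (f : G →* D ≀ᵣ Q) :
    ⁅(rightHom.comp f).ker, (rightHom.comp f).ker⁆ ≤ f.ker := by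
  rw [Subgroup.commutator_le]
  intro g hg h hh
  have hg' : (f g).right = 1 := hg
  have hh' : (f h).right = 1 := hh
  rw [MonoidHom.mem_ker, map_commutatorElement, commutatorElement_eq_one_iff_mul_comm]
  ext <;> simp [hg', hh', mul_comm]

variable {α : Type*} (R : Subgroup (FreeGroup α)) [R.Normal]

open Classical in
/-- The coordinate at the letter `x` of the Magnus embedding of `F/[R, R]`: the value of the left
component of `flowHom R x w` at a vertex `q` of the Cayley graph of `F/R` is the net number of
times the path labelled by `w`, started at `1`, leaves `q` along the edge labelled `x`. -/
noncomputable def flowHom (x : α × Bool) :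
    FreeGroup α →* Multiplicative ℤ ≀ᵣ (FreeGroup α ⧸ R) :=
  FreeGroup.lift fun i =>
    ⟨fun q => .ofAdd ((if q = 1 ∧ x = (i, true) then 1 else 0) -
      if q = QuotientGroup.mk (FreeGroup.of i) ∧ x = (i, false) then 1 else 0),
     QuotientGroup.mk (FreeGroup.of i)⟩

/-- The net number of times the path labelled by `w`, started at the vertex `1` of the Cayley graph
of `F/R`, leaves the vertex `q` along the edge labelled `x`; a traversal of that edge in the
opposite direction counts as `-1`. -/
noncomputable def netFlow (x : α × Bool) (w : List (α × Bool)) (q : FreeGroup α ⧸ R) : ℤ :=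
  ((flowHom R x (FreeGroup.mk w)).left q).toAdd

lemma rightHom_comp_flowHom (x : α × Bool) :
    rightHom.comp (flowHom R x) = QuotientGroup.mk' R := by
  ext i
  simp [flowHom]

lemma flowHom_right (x : α × Bool) (g : FreeGroup α) : (flowHom R x g).right = g :=
  DFunLike.congr_fun (rightHom_comp_flowHom R x) g

lemma commutator_le_ker_flowHom (x : α × Bool) : ⁅R, R⁆ ≤ (flowHom R x).ker := by
  have h := commutator_ker_rightHom_comp_le_ker (flowHom R x)
  rwa [rightHom_comp_flowHom, QuotientGroup.ker_mk'] at h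

lemma netFlow_congr {w w' : List (α × Bool)}
    (h : (FreeGroup.mk w)⁻¹ * FreeGroup.mk w' ∈ ⁅R, R⁆) (x : α × Bool) :
    netFlow R x w = netFlow R x w' := by
  have hx : flowHom R x (FreeGroup.mk w) = flowHom R x (FreeGroup.mk w') :=
    ((MonoidHom.eq_iff _).2 (commutator_le_ker_flowHom R x h)).symm
  funext q
  rw [netFlow, netFlow, hx]

lemma netFlow_nil (x : α × Bool) (q : FreeGroup α ⧸ R) : netFlow R x [] q = 0 := by
  simp [netFlow, ← FreeGroup.one_eq_mk]

lemma netFlow_cons (x l : α × Bool) (w : List (α × Bool)) (q : FreeGroup α ⧸ R) :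
    netFlow R x (l :: w) q =
      netFlow R x [l] q + netFlow R x w ((FreeGroup.mk [l] : FreeGroup α ⧸ R)⁻¹ * q) := by
  rw [netFlow, mk_cons, map_mul, mul_left, Pi.mul_apply, toAdd_mul, flowHom_right, netFlow, netFlow]

open Classical in
lemma netFlow_singleton (x l : α × Bool) (q : FreeGroup α ⧸ R) :
    netFlow R x [l] q = (if q = 1 ∧ x = l then 1 else 0) -
      if q = FreeGroup.mk [l] ∧ x = (l.1, !l.2) then 1 else 0 := by
  obtain ⟨i, _ | _⟩ := l
  · have h_inv : FreeGroup.mk [(i, false)] = (FreeGroup.of i)⁻¹ := rfl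
    have h_start : (FreeGroup.of i : FreeGroup α ⧸ R) * q = 1 ↔
        q = (FreeGroup.of i : FreeGroup α ⧸ R)⁻¹ := mul_eq_one_iff_eq_inv'
    simp [netFlow, flowHom, h_inv, h_start]
  · have h_of : FreeGroup.mk [(i, true)] = FreeGroup.of i := rfl
    simp [netFlow, flowHom, h_of]

lemma netFlow_eq_zero_of_not_visited (x : α × Bool) (w : List (α × Bool)) (q : FreeGroup α ⧸ R)
    (h : ∀ p, p <+: w → (FreeGroup.mk p : FreeGroup α ⧸ R) ≠ q) : netFlow R x w q = 0 := by
  classical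
  induction w generalizing q with
  | nil => exact netFlow_nil R x q
  | cons l w ih =>
    have h_start : q ≠ 1 := (h [] List.nil_prefix).symm
    have h_first : q ≠ FreeGroup.mk [l] := (h [l] (by simp)).symm
    have h_rest : netFlow R x w ((FreeGroup.mk [l] : FreeGroup α ⧸ R)⁻¹ * q) = 0 := by
      refine ih _ fun p hp hpq => h (l :: p) (List.cons_prefix_cons.2 ⟨rfl, hp⟩) ?_
      rw [mk_cons, QuotientGroup.mk_mul, hpq, mul_inv_cancel_left]
    rw [netFlow_cons, h_rest, netFlow_singleton]
    simp [h_start, h_first]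

variable {R}

open Classical in
lemma SelfAvoiding.netFlow_cons_one {l : α × Bool} {w : List (α × Bool)}
    (h : SelfAvoiding R (l :: w)) (x : α × Bool) :
    netFlow R x (l :: w) 1 = if x = l then 1 else 0 := by
  have h_first : (1 : FreeGroup α ⧸ R) ≠ FreeGroup.mk [l] := fun e =>
    h [l] ⟨[], w, rfl⟩ (List.cons_ne_nil _ _) ((QuotientGroup.eq_one_iff _).1 e.symm)
  have h_rest : netFlow R x w ((FreeGroup.mk [l] : FreeGroup α ⧸ R)⁻¹ * 1) = 0 := by
    refine netFlow_eq_zero_of_not_visited R x w _ fun p hp e => ?_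
    refine h (l :: p) (List.cons_prefix_cons.2 ⟨rfl, hp⟩).isInfix (List.cons_ne_nil _ _) ?_
    rw [← QuotientGroup.eq_one_iff, mk_cons, QuotientGroup.mk_mul, e, mul_one, mul_inv_cancel]
  rw [netFlow_cons, h_rest, netFlow_singleton]
  simp [h_first]

-- A self-avoiding path never returns to its start, so the flow at `1` determines the first letter.
lemma SelfAvoiding.head_eq {l l' : α × Bool} {w w' : List (α × Bool)}
    (hw : SelfAvoiding R (l :: w)) (hw' : SelfAvoiding R (l' :: w'))
    (h : (FreeGroup.mk (l :: w))⁻¹ * FreeGroup.mk (l' :: w') ∈ ⁅R, R⁆) : l = l' := by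
  have hflow := congrFun (netFlow_congr R h l) 1
  by_contra hne
  simp [hw.netFlow_cons_one, hw'.netFlow_cons_one, hne] at hflow

theorem SelfAvoiding.eq_of_inv_mul_mem_commutator {w w' : List (α × Bool)}
    (hw : SelfAvoiding R w) (hw' : SelfAvoiding R w')
    (h : (FreeGroup.mk w)⁻¹ * FreeGroup.mk w' ∈ ⁅R, R⁆) : w = w' := by
  have hR := Subgroup.commutator_le_left R R h
  induction w generalizing w' with
  | nil => exact (hw'.eq_nil (by simpa [← FreeGroup.one_eq_mk] using hR)).symm
  | cons l w ih =>
    cases w' with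
    | nil => exact hw.eq_nil (by simpa [← FreeGroup.one_eq_mk] using inv_mem hR)
    | cons l' w' =>
      obtain rfl := hw.head_eq hw' h
      have h_tail : (FreeGroup.mk w)⁻¹ * FreeGroup.mk w' ∈ ⁅R, R⁆ := by
        rwa [mk_cons l w, mk_cons l w', mul_inv_rev, mul_assoc, inv_mul_cancel_left] at h
      rw [ih (hw.infix (List.suffix_cons l w).isInfix) (hw'.infix (List.suffix_cons l w').isInfix)
        h_tail (Subgroup.commutator_le_left R R h_tail)]

end Flow

section Height

lemma derivedSeries_succ_le_ker {G A : Type*} [Group G] [CommGroup A] (f : G →* A) (n : ℕ) :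
    derivedSeries G (n + 1) ≤ f.ker :=
  (derivedSeries_antitone G (Nat.le_add_left 1 n)).trans <| by
    rw [derivedSeries_one]
    exact Abelianization.commutator_subset_ker f

variable {α : Type*} [DecidableEq α]

/-- The exponent sum of the generator `a`, as a homomorphism. -/
def exponentSum (a : α) : FreeGroup α →* Multiplicative ℤ :=
  FreeGroup.lift (Pi.mulSingle a (.ofAdd 1))

/-- The exponent sum of `a` in a word, thought of as the height reached by the path it labels. -/
def height (a : α) (w : List (α × Bool)) : ℤ :=
  (exponentSum a (FreeGroup.mk w)).toAdd

variable (a : α)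

lemma height_nil : height a [] = 0 := by
  simp [height, ← FreeGroup.one_eq_mk]

lemma height_append (u v : List (α × Bool)) : height a (u ++ v) = height a u + height a v := by
  simp [height, ← FreeGroup.mul_mk]

lemma height_invRev (w : List (α × Bool)) : height a (FreeGroup.invRev w) = -height a w := by
  simp [height, ← FreeGroup.inv_mk]

lemma height_singleton (i : α) (ε : Bool) :
    height a [(i, ε)] = if i = a then (if ε then 1 else -1) else 0 := by
  rcases eq_or_ne i a with rfl | hi
  · cases ε <;> simp [height, exponentSum, FreeGroup.lift_mk]
  · cases ε <;> simp [height, exponentSum, FreeGroup.lift_mk, hi]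

lemma height_cons (l : α × Bool) (w : List (α × Bool)) :
    height a (l :: w) = height a [l] + height a w :=
  height_append a [l] w

lemma height_singleton_true_nonneg (i : α) : 0 ≤ height a [(i, true)] := by
  rw [height_singleton, if_pos rfl]
  split_ifs <;> simp

lemma height_replicate (k : ℕ) : height a (List.replicate k (a, true)) = k := by
  induction k with
  | zero => exact height_nil a
  | succ k ih =>
    rw [List.replicate_succ, height_cons, ih, height_singleton]
    simp [add_comm]

lemma abs_height_le_length (w : List (α × Bool)) : |height a w| ≤ w.length := by
  induction w with
  | nil => simp [height_nil]
  | cons l w ih =>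
    have h_letter : |height a [l]| ≤ 1 := by
      rw [height_singleton]
      split_ifs <;> simp
    rw [height_cons, List.length_cons, Nat.cast_succ, add_comm (w.length : ℤ)]
    exact (abs_add_le _ _).trans (add_le_add h_letter ih)

variable {a}

lemma mk_notMem_of_height_ne_zero {R : Subgroup (FreeGroup α)} (hR : R ≤ (exponentSum a).ker)
    {w : List (α × Bool)} (hw : height a w ≠ 0) : FreeGroup.mk w ∉ R :=
  fun h => hw (congrArg Multiplicative.toAdd (hR h))

end Height

section Girth

variable {α : Type*}

lemma mk_singleton_notMem_derivedSeries_succ (l : α × Bool) (n : ℕ) :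
    FreeGroup.mk [l] ∉ derivedSeries (FreeGroup α) (n + 1) := by
  classical
  refine mk_notMem_of_height_ne_zero (a := l.1) (derivedSeries_succ_le_ker _ n) ?_
  rw [height_singleton]
  cases l.2 <;> simp

/-- `R` contains no nonempty reduced word of length at most `n`: every cycle in the Cayley graph of
`F/R` is longer than `n`. -/
def GirthGT (R : Subgroup (FreeGroup α)) (n : ℕ) : Prop :=
  ∀ w : List (α × Bool), FreeGroup.IsReduced w → w ≠ [] → w.length ≤ n → FreeGroup.mk w ∉ R

lemma GirthGT.selfAvoiding {R : Subgroup (FreeGroup α)} {n : ℕ} (hR : GirthGT R n)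
    {w : List (α × Bool)} (hw : FreeGroup.IsReduced w) (hn : w.length ≤ n) : SelfAvoiding R w :=
  fun v hvw hv => hR v (hw.infix hvw) hv (hvw.length_le.trans hn)

-- Cutting a short reduced relator after its first letter gives two distinct self-avoiding words
-- that represent the same element.
theorem girthGT_derivedSeries (n : ℕ) : GirthGT (derivedSeries (FreeGroup α) n) n := by
  induction n with
  | zero => exact fun w _ hne h_len => absurd (List.length_eq_zero_iff.1 (Nat.le_zero.1 h_len)) hne
  | succ n ih =>
    intro w hw hne h_len hmem
    match w, hw, hne with
    | [l], _, _ => exact mk_singleton_notMem_derivedSeries_succ l n hmem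
    | l :: l' :: w, hw, _ =>
      rw [List.length_cons, Nat.add_le_add_iff_right] at h_len
      have h_tail : SelfAvoiding (derivedSeries (FreeGroup α) n) (l' :: w) :=
        ih.selfAvoiding (hw.infix (List.suffix_cons l _).isInfix) h_len
      have h_inv : SelfAvoiding (derivedSeries (FreeGroup α) n) [(l.1, !l.2)] :=
        ih.selfAvoiding .singleton ((Nat.le_add_left 1 w.length).trans h_len)
      have h_eq : [(l.1, !l.2)] = l' :: w := by
        refine h_inv.eq_of_inv_mul_mem_commutator h_tail ?_
        rwa [mk_inv_letter, inv_inv, ← mk_cons]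
      have h_not_cancel := (FreeGroup.isReduced_cons_cons.1 hw).1
      simp [← (List.cons.inj h_eq).1] at h_not_cancel

end Girth

section Bridges

variable {α : Type*} {a : α} {T : ℕ} {u v w : List (α × Bool)}

/-- A reduced word whose first and last letters, if any, are generators rather than inverses of
generators; such words stay reduced when concatenated. -/
structure HasPositiveEnds (w : List (α × Bool)) : Prop where
  isReduced : FreeGroup.IsReduced w
  head : ∀ l ∈ w.head?, l.2 = true
  getLast : ∀ l ∈ w.getLast?, l.2 = true

lemma HasPositiveEnds.append (hu : HasPositiveEnds u) (hv : HasPositiveEnds v) :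
    HasPositiveEnds (u ++ v) where
  isReduced := List.isChain_append.2 ⟨hu.isReduced, hv.isReduced, fun x hx y hy _ => by
    rw [hu.getLast x hx, hv.head y hy]⟩
  head l hl := by
    rw [List.head?_append, Option.mem_def, Option.or_eq_some_iff] at hl
    exact hl.elim (hu.head l) fun h => hv.head l h.2
  getLast l hl := by
    rw [List.getLast?_append, Option.mem_def, Option.or_eq_some_iff] at hl
    exact hl.elim (hv.getLast l) fun h => hu.getLast l h.2

lemma HasPositiveEnds.replicate (k : ℕ) (i : α) : HasPositiveEnds (List.replicate k (i, true)) where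
  isReduced := List.isChain_replicate_of_rel k fun _ => rfl
  head l hl := by rw [List.eq_of_mem_replicate (List.mem_of_mem_head? hl)]
  getLast l hl := by rw [List.eq_of_mem_replicate (List.mem_of_mem_getLast? hl)]

/-- The word `a ^ (T + 1) * w * a ^ T`, which is a bridge when `w` is shallow. -/
def block (a : α) (T : ℕ) (w : List (α × Bool)) : List (α × Bool) :=
  List.replicate (T + 1) (a, true) ++ (w ++ List.replicate T (a, true))

lemma length_block (a : α) (T : ℕ) (w : List (α × Bool)) :
    (block a T w).length = w.length + (2 * T + 1) := by
  simp only [block, List.length_append, List.length_replicate]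
  omega

lemma block_injective (a : α) (T : ℕ) : Function.Injective (block a T) :=
  fun u v h => by simpa [block] using h

variable [DecidableEq α] {R : Subgroup (FreeGroup α)}

/-- A bridge is a self-avoiding word whose path stays strictly above its start and never rises above
its end. Bridges can be concatenated without creating self-intersections. -/
structure IsBridge (R : Subgroup (FreeGroup α)) (a : α) (w : List (α × Bool)) : Prop where
  selfAvoiding : SelfAvoiding R w
  prefix_pos : ∀ p, p <+: w → p ≠ [] → 0 < height a p
  suffix_nonneg : ∀ s, s <:+ w → 0 ≤ height a s

lemma IsBridge.nil : IsBridge R a [] where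
  selfAvoiding v hv hne := absurd (List.infix_nil.1 hv) hne
  prefix_pos p hp hne := absurd (List.prefix_nil.1 hp) hne
  suffix_nonneg s hs := by rw [List.suffix_nil.1 hs, height_nil]

lemma IsBridge.append (hR : R ≤ (exponentSum a).ker) (hu : IsBridge R a u) (hv : IsBridge R a v) :
    IsBridge R a (u ++ v) where
  selfAvoiding x hx hne := by
    rcases List.infix_append_iff_ne_nil.1 hx with hx | hx | ⟨s, p, -, hp, rfl, hsu, hpv⟩
    · exact hu.selfAvoiding x hx hne
    · exact hv.selfAvoiding x hx hne
    · refine mk_notMem_of_height_ne_zero hR (ne_of_gt ?_)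
      rw [height_append]
      exact add_pos_of_nonneg_of_pos (hu.suffix_nonneg s hsu) (hv.prefix_pos p hpv hp)
  prefix_pos p hp hne := by
    rcases isPrefix_append_iff.1 hp with hp | ⟨q, hq, rfl⟩
    · exact hu.prefix_pos p hp hne
    · rcases eq_or_ne q [] with rfl | hq_ne
      · rw [List.append_nil] at hne ⊢
        exact hu.prefix_pos u List.prefix_rfl hne
      · rw [height_append]
        exact add_pos_of_nonneg_of_pos (hu.suffix_nonneg u List.suffix_rfl)
          (hv.prefix_pos q hq hq_ne)
  suffix_nonneg s hs := by
    rcases isSuffix_append_iff.1 hs with hs | ⟨q, hq, rfl⟩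
    · exact hv.suffix_nonneg s hs
    · rw [height_append]
      exact add_nonneg (hu.suffix_nonneg q hq) (hv.suffix_nonneg v List.suffix_rfl)

/-- A word whose path ends no lower than it starts, sinks at most `T` below its start and rises at
most `T` above its end. -/
structure IsShallow (a : α) (T : ℕ) (w : List (α × Bool)) : Prop where
  hasPositiveEnds : HasPositiveEnds w
  prefix_ge : ∀ p, p <+: w → -(T : ℤ) ≤ height a p
  suffix_ge : ∀ s, s <:+ w → -(T : ℤ) ≤ height a s
  nonneg : 0 ≤ height a w

lemma IsShallow.of_length_le (hw : HasPositiveEnds w) (h_len : w.length ≤ T)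
    (h_nonneg : 0 ≤ height a w) : IsShallow a T w := by
  have h_infix : ∀ v, v <:+: w → -(T : ℤ) ≤ height a v := fun v hv => by
    have h_height := (abs_le.1 (abs_height_le_length a v)).1
    have h_length := hv.length_le
    omega
  exact ⟨hw, fun p hp => h_infix p hp.isInfix, fun s hs => h_infix s hs.isInfix, h_nonneg⟩

lemma IsShallow.nil : IsShallow a T [] :=
  .of_length_le (.replicate 0 a) (Nat.zero_le T) (height_nil a).ge

lemma IsShallow.append (hu : IsShallow a T u) (hv : IsShallow a T v) : IsShallow a T (u ++ v) where
  hasPositiveEnds := hu.hasPositiveEnds.append hv.hasPositiveEnds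
  prefix_ge p hp := by
    rcases isPrefix_append_iff.1 hp with hp | ⟨q, hq, rfl⟩
    · exact hu.prefix_ge p hp
    · rw [height_append]
      exact le_add_of_nonneg_of_le hu.nonneg (hv.prefix_ge q hq)
  suffix_ge s hs := by
    rcases isSuffix_append_iff.1 hs with hs | ⟨q, hq, rfl⟩
    · exact hv.suffix_ge s hs
    · rw [height_append]
      exact le_add_of_le_of_nonneg (hu.suffix_ge q hq) hv.nonneg
  nonneg := by
    rw [height_append]
    exact add_nonneg hu.nonneg hv.nonneg

lemma height_of_isPrefix_replicate {k : ℕ} {p : List (α × Bool)}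
    (hp : p <+: List.replicate k (a, true)) : height a p = p.length := by
  rw [(List.prefix_replicate_iff.1 hp).2, height_replicate, List.length_replicate]

lemma height_of_isSuffix_replicate {k : ℕ} {s : List (α × Bool)}
    (hs : s <:+ List.replicate k (a, true)) : height a s = s.length := by
  rw [(List.suffix_replicate_iff.1 hs).2, height_replicate, List.length_replicate]

lemma IsShallow.height_pos_of_isPrefix_block (hw : IsShallow a T w) {p : List (α × Bool)}
    (hp : p <+: block a T w) (hne : p ≠ []) : 0 < height a p := by
  rcases isPrefix_append_iff.1 hp with hp | ⟨q, hq, rfl⟩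
  · rw [height_of_isPrefix_replicate hp]
    exact_mod_cast List.length_pos_iff.2 hne
  · rw [height_append, height_replicate, Nat.cast_succ]
    rcases isPrefix_append_iff.1 hq with hq | ⟨r, hr, rfl⟩
    · linarith [hw.prefix_ge q hq]
    · rw [height_append, height_of_isPrefix_replicate hr]
      linarith [hw.nonneg]

lemma IsShallow.height_nonneg_of_isSuffix_block (hw : IsShallow a T w) {s : List (α × Bool)}
    (hs : s <:+ block a T w) : 0 ≤ height a s := by
  rcases isSuffix_append_iff.1 hs with hs | ⟨q, hq, rfl⟩
  · rcases isSuffix_append_iff.1 hs with hs | ⟨q, hq, rfl⟩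
    · rw [height_of_isSuffix_replicate hs]
      exact Nat.cast_nonneg _
    · rw [height_append, height_replicate]
      linarith [hw.suffix_ge q hq]
  · rw [height_append, height_append, height_replicate, height_of_isSuffix_replicate hq]
    linarith [hw.nonneg]

lemma IsShallow.isBridge_block {n : ℕ} (hw : IsShallow a T w) (hR : GirthGT R n)
    (hn : (block a T w).length ≤ n) : IsBridge R a (block a T w) where
  selfAvoiding := hR.selfAvoiding
    ((HasPositiveEnds.replicate _ a).append (hw.hasPositiveEnds.append (.replicate _ a))).isReduced
    hn
  prefix_pos _ hp hne := hw.height_pos_of_isPrefix_block hp hne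
  suffix_nonneg _ hs := hw.height_nonneg_of_isSuffix_block hs

end Bridges

section Counting

open scoped Computability

lemma finite_setOf_length_eq_and {β : Type*} [Finite β] (P : List β → Prop) (n : ℕ) :
    {w : List β | w.length = n ∧ P w}.Finite :=
  (List.finite_length_eq β n).subset fun _ hw => hw.1

lemma ncard_length_succ {β : Type*} [Fintype β] (P : List β → Prop) (n : ℕ) :
    {w : List β | w.length = n + 1 ∧ P w}.ncard =
      ∑ b, {w : List β | w.length = n ∧ P (b :: w)}.ncard := by
  have h_union : {w : List β | w.length = n + 1 ∧ P w} =
      ⋃ b, List.cons b '' {w : List β | w.length = n ∧ P (b :: w)} := by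
    ext w
    cases w <;> simp
  rw [h_union, Set.ncard_iUnion_of_finite
    (fun b => (finite_setOf_length_eq_and _ n).image _), finsum_eq_sum_of_fintype]
  · exact Finset.sum_congr rfl fun b _ => Set.ncard_image_of_injective _ List.cons_injective
  · refine fun b c hbc => Set.disjoint_left.2 ?_
    rintro _ ⟨u, -, rfl⟩ ⟨v, -, hv⟩
    exact hbc (List.cons.inj hv).1.symm

lemma ncard_isChain_cons {β : Type*} [Finite β] {r : β → β → Prop} {d : ℕ}
    (hd : ∀ b, {c | r b c}.ncard = d) (b : β) (n : ℕ) :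
    {w : List β | w.length = n ∧ (b :: w).IsChain r}.ncard = d ^ n := by
  classical
  have := Fintype.ofFinite β
  induction n generalizing b with
  | zero =>
    have h_nil : {w : List β | w.length = 0 ∧ (b :: w).IsChain r} = {[]} := by
      ext w
      cases w <;> simp
    rw [h_nil, Set.ncard_singleton, pow_zero]
  | succ n ih =>
    have h_fiber (c : β) : {w : List β | w.length = n ∧ (b :: c :: w).IsChain r}.ncard =
        if r b c then d ^ n else 0 := by
      split_ifs with hbc <;> simp [List.isChain_cons_cons, hbc, ih]
    rw [ncard_length_succ, Finset.sum_congr rfl fun c _ => h_fiber c, ← Finset.sum_filter,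
      Finset.sum_const, smul_eq_mul, pow_succ', ← hd b, Set.ncard_eq_toFinset_card',
      Set.toFinset_ofPred]

variable {α : Type*}

lemma ncard_isReduced [Fintype α] (n : ℕ) :
    {w : List (α × Bool) | w.length = n + 1 ∧ FreeGroup.IsReduced w}.ncard =
      2 * Fintype.card α * (2 * Fintype.card α - 1) ^ n := by
  have h_next (l : α × Bool) :
      {l' : α × Bool | l.1 = l'.1 → l.2 = l'.2}.ncard = 2 * Fintype.card α - 1 := by
    have h_compl : {l' : α × Bool | l.1 = l'.1 → l.2 = l'.2} = {(l.1, !l.2)}ᶜ := by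
      ext ⟨i, ε⟩
      simp [Prod.ext_iff, eq_comm]
    rw [h_compl, Set.ncard_compl, Set.ncard_singleton, Nat.card_prod]
    simp [mul_comm]
  calc _ = ∑ l : α × Bool, (2 * Fintype.card α - 1) ^ n := by
        rw [ncard_length_succ]
        exact Finset.sum_congr rfl fun l _ => ncard_isChain_cons h_next l n
    _ = _ := by simp [mul_comm 2]

lemma isReduced_invRev {w : List (α × Bool)} (hw : FreeGroup.IsReduced w) :
    FreeGroup.IsReduced (FreeGroup.invRev w) := by
  classical
  rw [FreeGroup.isReduced_iff_reduce_eq, FreeGroup.reduce_invRev, hw.reduce_eq]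

section Half

variable [DecidableEq α]

/-- The reduced words of length `n` whose path does not end below its start. -/
def nonnegWords (a : α) (n : ℕ) : Set (List (α × Bool)) :=
  {w | w.length = n ∧ FreeGroup.IsReduced w ∧ 0 ≤ height a w}

-- Inversion exchanges words of positive and of negative height.
lemma ncard_isReduced_le [Finite α] (a : α) (n : ℕ) :
    {w : List (α × Bool) | w.length = n ∧ FreeGroup.IsReduced w}.ncard ≤
      2 * (nonnegWords a n).ncard := by
  have h_cover : {w : List (α × Bool) | w.length = n ∧ FreeGroup.IsReduced w} ⊆
      nonnegWords a n ∪ FreeGroup.invRev '' nonnegWords a n := by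
    rintro w ⟨h_len, hw⟩
    rcases le_total 0 (height a w) with h | h
    · exact .inl ⟨h_len, hw, h⟩
    · refine .inr ⟨FreeGroup.invRev w, ⟨?_, isReduced_invRev hw, ?_⟩, FreeGroup.invRev_invRev⟩
      · rw [FreeGroup.invRev_length, h_len]
      · rwa [height_invRev, neg_nonneg]
  have h_fin : (nonnegWords a n).Finite := finite_setOf_length_eq_and _ n
  calc _ ≤ (nonnegWords a n ∪ FreeGroup.invRev '' nonnegWords a n).ncard :=
        Set.ncard_le_ncard h_cover (h_fin.union (h_fin.image _))
    _ ≤ (nonnegWords a n).ncard + (FreeGroup.invRev '' nonnegWords a n).ncard :=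
        Set.ncard_union_le _ _
    _ = 2 * (nonnegWords a n).ncard := by
        rw [Set.ncard_image_of_injective _ FreeGroup.invRev_injective, two_mul]

lemma pow_le_ncard_nonnegWords [Fintype α] (a : α) (n : ℕ) :
    (2 * Fintype.card α - 1) ^ n ≤ (nonnegWords a (n + 1)).ncard := by
  have h_half := ncard_isReduced_le a (n + 1)
  rw [ncard_isReduced, mul_assoc, Nat.mul_le_mul_left_iff two_pos] at h_half
  exact (Nat.le_mul_of_pos_left _ (Fintype.card_pos_iff.2 ⟨a⟩)).trans h_half

end Half

section Pad

variable [DecidableEq α] {a b : α} {u : List (α × Bool)}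

/-- Whichever of the generators `a` and `b` does not cancel against the letter `o`; the value `none`
stands for the end of an empty word. -/
def nonCancelling (a b : α) (o : Option (α × Bool)) : α :=
  if o = some (a, false) then b else a

lemma snd_eq_true_of_fst_eq_nonCancelling (hab : b ≠ a) {o : Option (α × Bool)} {l : α × Bool}
    (hl : l ∈ o) (h : l.1 = nonCancelling a b o) : l.2 = true := by
  rw [Option.mem_def.1 hl, nonCancelling] at h
  obtain ⟨i, _ | _⟩ := l <;> grind

/-- The word `x * u * y` for generators `x` and `y` that do not cancel against the ends of `u`. -/
def pad (a b : α) (u : List (α × Bool)) : List (α × Bool) :=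
  (nonCancelling a b u.head?, true) :: (u ++ [(nonCancelling a b u.getLast?, true)])

lemma length_pad (a b : α) (u : List (α × Bool)) : (pad a b u).length = u.length + 2 := by
  simp [pad]

lemma pad_injective (a b : α) : Function.Injective (pad a b) :=
  fun _ _ h => (List.append_inj' (List.cons.inj h).2 rfl).1

lemma hasPositiveEnds_pad (hab : b ≠ a) (hu : FreeGroup.IsReduced u) :
    HasPositiveEnds (pad a b u) where
  isReduced := by
    refine List.isChain_cons.2 ⟨fun l hl h => ?_, List.isChain_append.2 ⟨hu, .singleton _, ?_⟩⟩
    · rw [List.head?_append, Option.mem_def, Option.or_eq_some_iff] at hl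
      rcases hl with hl | ⟨-, hl⟩
      · exact (snd_eq_true_of_fst_eq_nonCancelling hab hl h.symm).symm
      · rw [← Option.mem_some.1 hl]
    · intro l hl l' hl' h
      obtain rfl := Option.mem_some.1 hl'
      exact snd_eq_true_of_fst_eq_nonCancelling hab hl h
  head l hl := by
    rw [← Option.mem_some.1 hl]
  getLast l hl := by
    rw [pad, ← List.cons_append, List.getLast?_concat] at hl
    rw [← Option.mem_some.1 hl]

lemma height_le_height_pad (c : α) : height c u ≤ height c (pad a b u) := by
  rw [pad, height_cons, height_append]
  exact le_add_of_nonneg_of_le (height_singleton_true_nonneg c _)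
    (le_add_of_nonneg_right (height_singleton_true_nonneg c _))

end Pad

section Languages

variable {β : Type*} {S : Language β} {L : ℕ}

lemma length_of_mem_pow (hS : ∀ w ∈ S, w.length = L) {n : ℕ} {w : List β} (hw : w ∈ S ^ n) :
    w.length = n * L := by
  obtain ⟨ws, rfl, rfl, h_mem⟩ := Language.mem_pow.1 hw
  rw [List.length_flatten, List.map_eq_replicate_iff.2 fun v hv => hS v (h_mem v hv),
    List.sum_replicate, smul_eq_mul]

lemma ncard_mem_mul (hS : ∀ w ∈ S, w.length = L) (U : Language β) :
    {w | w ∈ S * U}.ncard = {w | w ∈ S}.ncard * {w | w ∈ U}.ncard := by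
  have h_inj : Set.InjOn (fun p : List β × List β => p.1 ++ p.2) ({w | w ∈ S} ×ˢ {w | w ∈ U}) :=
    fun p hp q hq h => Prod.ext_iff.2 <| List.append_inj h <| by rw [hS _ hp.1, hS _ hq.1]
  rw [← Set.ncard_prod, ← h_inj.ncard_image, Set.image_prod]
  rfl

lemma ncard_mem_pow (hS : ∀ w ∈ S, w.length = L) (n : ℕ) :
    {w | w ∈ S ^ n}.ncard = {w | w ∈ S}.ncard ^ n := by
  induction n with
  | zero => exact Set.ncard_singleton []
  | succ n ih => rw [pow_succ', ncard_mem_mul hS, ih, pow_succ']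

lemma mem_kstar_of_mem_pow {n : ℕ} {w : List β} (hw : w ∈ S ^ n) : w ∈ S∗ := by
  rw [Language.kstar_eq_iSup_pow, Language.mem_iSup]
  exact ⟨n, hw⟩

lemma forall_mem_kstar {P : List β → Prop} (h_nil : P [])
    (h_append : ∀ u v, P u → P v → P (u ++ v)) (hS : ∀ w ∈ S, P w) : ∀ w ∈ S∗, P w := by
  intro w hw
  obtain ⟨ws, rfl, h_mem⟩ := Language.mem_kstar.1 hw
  clear hw
  induction ws with
  | nil => exact h_nil
  | cons v ws ih =>
    rw [List.forall_mem_cons] at h_mem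
    exact h_append v _ (hS v h_mem.1) (ih h_mem.2)

end Languages

end Counting

section Blocks

open scoped Computability

variable {α : Type*} [DecidableEq α] {a b : α} {t : ℕ}

lemma isShallow_pad (hab : b ≠ a) {u : List (α × Bool)} (hu : u ∈ nonnegWords a (t + 1)) :
    IsShallow a (t + 3) (pad a b u) :=
  .of_length_le (hasPositiveEnds_pad hab hu.2.1) (by rw [length_pad, hu.1])
    (hu.2.2.trans (height_le_height_pad a))

/-- The padded nonnegative words of length `t + 3`. -/
def paddedWords (a b : α) (t : ℕ) : Language (α × Bool) :=
  pad a b '' nonnegWords a (t + 1)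

/-- The blocks built from concatenations of `t` padded words. All have the same length
`(t + 2) * (t + 3) + 1`, of which only `O(t)` letters are prescribed. -/
def blockLanguage (a b : α) (t : ℕ) : Language (α × Bool) :=
  block a (t + 3) '' {w | w ∈ paddedWords a b t ^ t}

lemma length_of_mem_paddedWords {w : List (α × Bool)} (hw : w ∈ paddedWords a b t) :
    w.length = t + 3 := by
  obtain ⟨u, hu, rfl⟩ := hw
  rw [length_pad, hu.1]

lemma isShallow_of_mem_pow_paddedWords (hab : b ≠ a) {n : ℕ} {w : List (α × Bool)}
    (hw : w ∈ paddedWords a b t ^ n) : IsShallow a (t + 3) w := by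
  refine forall_mem_kstar .nil (fun _ _ => .append) ?_ w (mem_kstar_of_mem_pow hw)
  rintro _ ⟨u, hu, rfl⟩
  exact isShallow_pad hab hu

lemma length_of_mem_blockLanguage {w : List (α × Bool)} (hw : w ∈ blockLanguage a b t) :
    w.length = (t + 2) * (t + 3) + 1 := by
  obtain ⟨u, hu, rfl⟩ := hw
  rw [length_block, length_of_mem_pow (fun _ => length_of_mem_paddedWords) hu]
  ring

lemma pow_le_ncard_blockLanguage [Fintype α] (a b : α) (t : ℕ) :
    (2 * Fintype.card α - 1) ^ (t * t) ≤ {w | w ∈ blockLanguage a b t}.ncard :=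
  calc (2 * Fintype.card α - 1) ^ (t * t) = ((2 * Fintype.card α - 1) ^ t) ^ t := pow_mul _ t t
    _ ≤ (nonnegWords a (t + 1)).ncard ^ t := Nat.pow_le_pow_left (pow_le_ncard_nonnegWords a t) t
    _ = {w | w ∈ paddedWords a b t}.ncard ^ t := by
        rw [← Set.ncard_image_of_injective _ (pad_injective a b)]
        rfl
    _ = {w | w ∈ paddedWords a b t ^ t}.ncard :=
        (ncard_mem_pow (fun _ => length_of_mem_paddedWords) t).symm
    _ = {w | w ∈ blockLanguage a b t}.ncard :=
        (Set.ncard_image_of_injective _ (block_injective a (t + 3))).symm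

variable {R : Subgroup (FreeGroup α)} {n : ℕ}

lemma isBridge_of_mem_blockLanguage (hab : b ≠ a) (hR : GirthGT R n)
    (hn : (t + 2) * (t + 3) + 1 ≤ n) {w : List (α × Bool)} (hw : w ∈ blockLanguage a b t) :
    IsBridge R a w := by
  have h_len := length_of_mem_blockLanguage hw
  obtain ⟨u, hu, rfl⟩ := hw
  exact (isShallow_of_mem_pow_paddedWords hab hu).isBridge_block hR (h_len.trans_le hn)

theorem injOn_mk_kstar_blockLanguage [R.Normal] (hab : b ≠ a) (hR_ker : R ≤ (exponentSum a).ker)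
    (hR : GirthGT R n) (hn : (t + 2) * (t + 3) + 1 ≤ n) :
    Set.InjOn (fun w => (FreeGroup.mk w : FreeGroup α ⧸ ⁅R, R⁆))
      {w | w ∈ (blockLanguage a b t)∗} := by
  have h_bridge : ∀ w ∈ (blockLanguage a b t)∗, IsBridge R a w :=
    forall_mem_kstar .nil (fun _ _ => .append hR_ker) fun _ =>
      isBridge_of_mem_blockLanguage hab hR hn
  exact fun w hw w' hw' h => (h_bridge w hw).selfAvoiding.eq_of_inv_mul_mem_commutator
    (h_bridge w' hw').selfAvoiding (QuotientGroup.eq.1 h)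

end Blocks

section Balls

open scoped Computability

variable {m : ℕ} {G : Type*} [Group G] (σ : Fin m → G)

lemma wordEval_eq_lift (w : List (Fin m × Bool)) :
    wordEval σ w = FreeGroup.lift σ (FreeGroup.mk w) := by
  rw [FreeGroup.lift_mk, wordEval]
  congr 2
  funext l
  cases l.2 <;> rfl

lemma finite_ball (r : ℕ) : (ball σ r).Finite :=
  (List.finite_length_le (Fin m × Bool) r).image (wordEval σ)

lemma ball_subset_biUnion_image_isReduced (r : ℕ) :
    ball σ r ⊆ ⋃ j ∈ Finset.range (r + 1),
      wordEval σ '' {w | w.length = j ∧ FreeGroup.IsReduced w} := by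
  rintro _ ⟨w, h_len, rfl⟩
  simp only [Set.mem_iUnion, Finset.mem_range, Nat.lt_succ_iff]
  refine ⟨_, (FreeGroup.norm_mk_le (L₁ := w)).trans h_len, (FreeGroup.mk w).toWord,
    ⟨rfl, FreeGroup.isReduced_toWord⟩, ?_⟩
  rw [wordEval_eq_lift, FreeGroup.mk_toWord, ← wordEval_eq_lift]

lemma ncard_isReduced_le_of_le (hm : 1 ≤ m) {j r : ℕ} (hj : j ≤ r) :
    {w : List (Fin m × Bool) | w.length = j ∧ FreeGroup.IsReduced w}.ncard ≤
      2 * m * (2 * m - 1) ^ r := by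
  cases j with
  | zero =>
    have h_subset : {w : List (Fin m × Bool) | w.length = 0 ∧ FreeGroup.IsReduced w} ⊆ {[]} :=
      fun w hw => List.length_eq_zero_iff.1 hw.1
    calc _ ≤ 1 := Set.ncard_singleton ([] : List (Fin m × Bool)) ▸ Set.ncard_le_ncard h_subset
      _ ≤ 2 * m * (2 * m - 1) ^ r := Nat.mul_pos (by omega) (Nat.pow_pos (by omega))
  | succ j =>
    rw [ncard_isReduced, Fintype.card_fin]
    gcongr <;> omega

lemma ncard_ball_le (hm : 1 ≤ m) (r : ℕ) :
    (ball σ r).ncard ≤ (r + 1) * (2 * m * (2 * m - 1) ^ r) := by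
  have h_fin (j : ℕ) := finite_setOf_length_eq_and (β := Fin m × Bool) FreeGroup.IsReduced j
  calc (ball σ r).ncard
      ≤ (⋃ j ∈ Finset.range (r + 1),
          wordEval σ '' {w | w.length = j ∧ FreeGroup.IsReduced w}).ncard :=
        Set.ncard_le_ncard (ball_subset_biUnion_image_isReduced σ r) <|
          (Finset.finite_toSet _).biUnion fun j _ => (h_fin j).image _
    _ ≤ ∑ j ∈ Finset.range (r + 1),
          (wordEval σ '' {w | w.length = j ∧ FreeGroup.IsReduced w}).ncard :=
        Finset.set_ncard_biUnion_le _ _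
    _ ≤ ∑ _j ∈ Finset.range (r + 1), 2 * m * (2 * m - 1) ^ r :=
        Finset.sum_le_sum fun j hj => (Set.ncard_image_le (h_fin j)).trans <|
          ncard_isReduced_le_of_le hm (Finset.mem_range_succ_iff.1 hj)
    _ = (r + 1) * (2 * m * (2 * m - 1) ^ r) := by
        rw [Finset.sum_const, Finset.card_range, smul_eq_mul]

lemma pow_ncard_le_ncard_ball {S : Language (Fin m × Bool)} {L : ℕ} (hS : ∀ w ∈ S, w.length = L)
    (h_inj : Set.InjOn (wordEval σ) {w | w ∈ S∗}) (q : ℕ) :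
    {w | w ∈ S}.ncard ^ q ≤ (ball σ (q * L)).ncard := by
  have h_inj_pow : Set.InjOn (wordEval σ) {w | w ∈ S ^ q} :=
    h_inj.mono fun _ => mem_kstar_of_mem_pow
  rw [← ncard_mem_pow hS, ← h_inj_pow.ncard_image]
  refine Set.ncard_le_ncard ?_ (finite_ball σ _)
  rintro _ ⟨w, hw, rfl⟩
  exact ⟨w, (length_of_mem_pow hS hw).le, rfl⟩

end Balls

section GrowthRate

lemma tendsto_mul_pow_rpow_one_div {C c : ℝ} (hC : 0 < C) (hc : 0 ≤ c) :
    Tendsto (fun r : ℕ => ((r + 1) * (C * c ^ r)) ^ (1 / (r : ℝ))) atTop (𝓝 c) := by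
  have h_linear : Tendsto (fun r : ℕ => ((r : ℝ) + 1) ^ (1 / (r : ℝ))) atTop (𝓝 1) := by
    have h := (tendsto_rpow_div_mul_add 1 1 (-1) zero_ne_one).comp
      (tendsto_natCast_atTop_atTop.atTop_add (tendsto_const_nhds (x := (1 : ℝ))))
    exact h.congr fun r => by simp
  have h_const : Tendsto (fun r : ℕ => C ^ (1 / (r : ℝ))) atTop (𝓝 1) := by
    simpa using (tendsto_const_nhds (x := C)).rpow tendsto_one_div_atTop_nhds_zero_nat
      (.inl hC.ne')
  have h_mul := h_linear.mul (h_const.mul_const c)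
  rw [one_mul, one_mul] at h_mul
  refine h_mul.congr' ?_
  filter_upwards [eventually_ne_atTop 0] with r hr
  rw [Real.mul_rpow (by positivity) (by positivity), Real.mul_rpow hC.le (by positivity), one_div,
    Real.pow_rpow_inv_natCast hc hr]

variable {m : ℕ} {G : Type*} [Group G] (σ : Fin m → G)

lemma cast_two_mul_sub_one (hm : 1 ≤ m) : ((2 * m - 1 : ℕ) : ℝ) = 2 * m - 1 := by
  rw [Nat.cast_sub (by omega), Nat.cast_mul, Nat.cast_two, Nat.cast_one]

lemma two_mul_sub_one_pos (hm : 1 ≤ m) : (0 : ℝ) < 2 * m - 1 := by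
  have : (1 : ℝ) ≤ m := by exact_mod_cast hm
  linarith

/-- The bound of `ncard_ball_le` on the size of a ball of radius `r`, as a real number. -/
noncomputable def ballBound (m r : ℕ) : ℝ :=
  (r + 1) * (2 * m * (2 * m - 1) ^ r)

lemma ncard_ball_rpow_le (hm : 1 ≤ m) (r : ℕ) :
    ((ball σ r).ncard : ℝ) ^ (1 / (r : ℝ)) ≤ ballBound m r ^ (1 / (r : ℝ)) := by
  refine Real.rpow_le_rpow (Nat.cast_nonneg _) ?_ (by positivity)
  rw [ballBound, ← cast_two_mul_sub_one (by omega)]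
  exact_mod_cast ncard_ball_le σ hm r

lemma tendsto_ballBound_rpow (hm : 1 ≤ m) :
    Tendsto (fun r : ℕ => ballBound m r ^ (1 / (r : ℝ))) atTop (𝓝 (2 * m - 1)) :=
  tendsto_mul_pow_rpow_one_div (by positivity) (two_mul_sub_one_pos hm).le

lemma isBoundedUnder_ncard_ball_rpow (hm : 1 ≤ m) :
    IsBoundedUnder (· ≤ ·) atTop fun r : ℕ => ((ball σ r).ncard : ℝ) ^ (1 / (r : ℝ)) :=
  (tendsto_ballBound_rpow hm).isBoundedUnder_le.mono_le (.of_forall (ncard_ball_rpow_le σ hm))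

theorem growthRate_le (hm : 1 ≤ m) : growthRate σ ≤ 2 * m - 1 := by
  rw [← (tendsto_ballBound_rpow hm).limsup_eq]
  exact limsup_le_limsup (.of_forall (ncard_ball_rpow_le σ hm))
    (isCoboundedUnder_le_of_le (x := 0) _ fun r => by positivity)
    (tendsto_ballBound_rpow hm).isBoundedUnder_le

lemma rpow_one_div_le_growthRate (hm : 1 ≤ m) {K L : ℕ} (hL : 0 < L)
    (h : ∀ q, K ^ q ≤ (ball σ (q * L)).ncard) : (K : ℝ) ^ (1 / (L : ℝ)) ≤ growthRate σ := by
  refine le_limsup_of_frequently_le (frequently_atTop.2 fun N => ?_)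
    (isBoundedUnder_ncard_ball_rpow σ hm)
  refine ⟨(N + 1) * L, by nlinarith, ?_⟩
  calc (K : ℝ) ^ (1 / (L : ℝ)) = ((K : ℝ) ^ (N + 1)) ^ (1 / (((N + 1) * L : ℕ) : ℝ)) := by
        rw [← Real.rpow_natCast, ← Real.rpow_mul (Nat.cast_nonneg K), Nat.cast_mul]
        congr 1
        field_simp
    _ ≤ ((ball σ ((N + 1) * L)).ncard : ℝ) ^ (1 / (((N + 1) * L : ℕ) : ℝ)) :=
        Real.rpow_le_rpow (by positivity) (by exact_mod_cast h (N + 1)) (by positivity)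

lemma one_le_growthRate (hm : 1 ≤ m) : 1 ≤ growthRate σ := by
  have h_ball (q : ℕ) : 1 ^ q ≤ (ball σ (q * 1)).ncard := by
    rw [one_pow, Nat.one_le_iff_ne_zero, ← Nat.pos_iff_ne_zero, Set.ncard_pos (finite_ball σ _)]
    exact ⟨_, [], Nat.zero_le _, rfl⟩
  simpa using rpow_one_div_le_growthRate σ hm one_pos h_ball

end GrowthRate

section FreeSoluble

open scoped Computability

variable {m : ℕ}

/-- The images of the free basis in the quotient of the free group by `R`. -/
def basisImage (R : Subgroup (FreeGroup (Fin m))) [R.Normal] : Fin m → FreeGroup (Fin m) ⧸ R :=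
  fun i => FreeGroup.of i

lemma wordEval_basisImage (R : Subgroup (FreeGroup (Fin m))) [R.Normal]
    (w : List (Fin m × Bool)) : wordEval (basisImage R) w = FreeGroup.mk w := by
  have h_lift : FreeGroup.lift (basisImage R) = QuotientGroup.mk' R := by
    ext i
    simp [basisImage]
  rw [wordEval_eq_lift, h_lift, QuotientGroup.mk'_apply]

lemma injOn_wordEval_kstar_blockLanguage {a b : Fin m} (hab : b ≠ a) {t n : ℕ}
    (hn : (t + 2) * (t + 3) + 1 ≤ n) :
    Set.InjOn (wordEval (basisImage (derivedSeries (FreeGroup (Fin m)) (n + 1))))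
      {w | w ∈ (blockLanguage a b t)∗} := by
  obtain ⟨k, rfl⟩ : ∃ k, n = k + 1 := Nat.exists_eq_add_of_le' (by omega)
  exact (injOn_mk_kstar_blockLanguage hab (derivedSeries_succ_le_ker _ k)
    (girthGT_derivedSeries (k + 1)) hn).congr fun w _ => (wordEval_basisImage _ w).symm

theorem rpow_le_growthRate_freeSoluble (hm : 2 ≤ m) {t n : ℕ}
    (hn : (t + 2) * (t + 3) + 1 ≤ n) :
    (2 * m - 1 : ℝ) ^ ((t : ℝ) ^ 2 / ((t + 2) * (t + 3) + 1)) ≤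
      growthRate (basisImage (derivedSeries (FreeGroup (Fin m)) (n + 1))) := by
  have := Fin.nontrivial_iff_two_le.2 hm
  obtain ⟨b, a, hba⟩ := exists_pair_ne (Fin m)
  have h_card : (2 * m - 1 : ℝ) ^ (t * t) ≤ {w | w ∈ blockLanguage a b t}.ncard := by
    have h := pow_le_ncard_blockLanguage a b t
    rw [Fintype.card_fin] at h
    rw [← cast_two_mul_sub_one (by omega)]
    exact_mod_cast h
  have h_base : (0 : ℝ) ≤ 2 * m - 1 := (two_mul_sub_one_pos (by omega)).le
  calc (2 * m - 1 : ℝ) ^ ((t : ℝ) ^ 2 / ((t + 2) * (t + 3) + 1))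
      = ((2 * m - 1 : ℝ) ^ (t * t)) ^ (1 / (((t + 2) * (t + 3) + 1 : ℕ) : ℝ)) := by
        rw [← Real.rpow_natCast _ (t * t), ← Real.rpow_mul h_base]
        congr 1
        push_cast
        ring
    _ ≤ ({w | w ∈ blockLanguage a b t}.ncard : ℝ) ^ (1 / (((t + 2) * (t + 3) + 1 : ℕ) : ℝ)) :=
        Real.rpow_le_rpow (by positivity) h_card (by positivity)
    _ ≤ _ := rpow_one_div_le_growthRate _ (by omega) (Nat.succ_pos _) <|
        pow_ncard_le_ncard_ball _ (fun _ => length_of_mem_blockLanguage)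
          (injOn_wordEval_kstar_blockLanguage hba hn)

lemma tendsto_rpow_sq_div {c : ℝ} (hc : 0 < c) :
    Tendsto (fun t : ℕ => c ^ ((t : ℝ) ^ 2 / ((t + 2) * (t + 3) + 1))) atTop (𝓝 c) := by
  have h_inv : Tendsto (fun t : ℕ => (t : ℝ)⁻¹) atTop (𝓝 0) := tendsto_inv_atTop_nhds_zero_nat
  have h_recip : Tendsto (fun t : ℕ => (1 + 5 * (t : ℝ)⁻¹ + 7 * (t : ℝ)⁻¹ ^ 2)⁻¹) atTop (𝓝 1) := by
    simpa using (((h_inv.const_mul 5).const_add 1).add ((h_inv.pow 2).const_mul 7)).inv₀ (by simp)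
  have h_exponent : Tendsto (fun t : ℕ => (t : ℝ) ^ 2 / ((t + 2) * (t + 3) + 1)) atTop (𝓝 1) := by
    refine h_recip.congr' ?_
    filter_upwards [eventually_ne_atTop 0] with t ht
    field_simp
    ring
  simpa using (tendsto_const_nhds (x := c)).rpow h_exponent (.inl hc.ne')

theorem eventually_lt_growthRate_freeSoluble (hm : 1 ≤ m) {c : ℝ} (hc : c < 2 * m - 1) :
    ∀ᶠ n in atTop, c < growthRate (basisImage (derivedSeries (FreeGroup (Fin m)) n)) := by
  rcases hm.eq_or_lt with rfl | hm
  · refine .of_forall fun n => lt_of_lt_of_le ?_ (one_le_growthRate _ le_rfl)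
    norm_num at hc ⊢
    exact hc
  · obtain ⟨t, ht⟩ :=
      ((tendsto_rpow_sq_div (two_mul_sub_one_pos hm.le)).eventually (lt_mem_nhds hc)).exists
    filter_upwards [eventually_ge_atTop ((t + 2) * (t + 3) + 2)] with n hn
    obtain ⟨k, rfl⟩ : ∃ k, n = k + 1 := Nat.exists_eq_add_of_le' (by omega)
    exact ht.trans_le (rpow_le_growthRate_freeSoluble hm (Nat.le_of_succ_le_succ hn))

end FreeSoluble

/-- The growth rates of the free soluble groups `F_m/F_m^{(n)}`
(where `F_m^{(n)}` is the `n`-th term of the derived series of the free group `F_m`,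
with `F_m^{(1)} = F_m'`) with respect to the images of the free basis `A` approach
`2m - 1` as `n → ∞`. -/
theorem growth_rate_free_soluble_tendsto (m : ℕ) (hm : 1 ≤ m) :
    Filter.Tendsto
      (fun n : ℕ => growthRate (fun i =>
        (QuotientGroup.mk (FreeGroup.of i) :
          FreeGroup (Fin m) ⧸ derivedSeries (FreeGroup (Fin m)) n)))
      Filter.atTop (nhds (2 * (m : ℝ) - 1)) := by
  change Tendsto (fun n => growthRate (basisImage (derivedSeries (FreeGroup (Fin m)) n))) _ _
  refine tendsto_order.2 ⟨fun c hc => eventually_lt_growthRate_freeSoluble hm hc, fun c hc => ?_⟩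
  exact .of_forall fun n => (growthRate_le _ hm).trans_lt hc
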